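/- arXiv:1604.07014 — 2 statements merged into one kernel-verified Lean document; each statement's English description precedes it below -/
import Mathlib

section
/- Let ε > 0 and for θ₀ ∈ (0, π/2) define L_p(θ₀) = ∫_{−θ₀}^{θ₀} dθ / √( 2ε·(cos(2θ) − cos(2θ₀)) ). Then L_p(θ₀) tends to π/(2√ε) as θ₀ → 0⁺. -/
open Filter

/-- The length `L_p(θ₀)` of the ladder admitting a single-perversion equilibrium
of amplitude `θ₀`. -/
noncomputable def Lp (ε θ₀ : ℝ) : ℝ :=
  ∫ θ in (-θ₀)..θ₀, 1 / Real.sqrt (2 * ε * (Real.cos (2 * θ) - Real.cos (2 * θ₀)))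

/-!
Since `cos 2θ - cos 2θ₀ = 2 (sin² θ₀ - sin² θ)`, the length is
`L_p(θ₀) = (2√ε)⁻¹ ∫ dθ / √(sin² θ₀ - sin² θ)`. With `cos θ` in the numerator the integrand is the
derivative of `arcsin (sin θ / sin θ₀)`, so the integral would be exactly `π`. As
`cos θ₀ ≤ cos θ ≤ 1` on `[-θ₀, θ₀]`, the true integral lies between `π` and `π / cos θ₀`.
-/

section

open Real Set
open scoped Topology

section ArcsinPrimitive

variable {f : ℝ → ℝ} {r : ℝ}

theorem hasDerivAt_arcsin_div {f' x : ℝ} (hf : HasDerivAt f f' x) (hfx : f x ∈ Ioo (-r) r) :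
    HasDerivAt (fun y => arcsin (f y / r)) (f' / √(r ^ 2 - f x ^ 2)) x := by
  have hr : 0 < r := by linarith [hfx.1, hfx.2]
  have hmem : f x / r ∈ Ioo (-1) 1 :=
    ⟨by rw [lt_div_iff₀ hr]; linarith [hfx.1], (div_lt_one hr).2 hfx.2⟩
  have hsqrt : √(r ^ 2 - f x ^ 2) = r * √(1 - (f x / r) ^ 2) := by
    rw [show r ^ 2 - f x ^ 2 = r ^ 2 * (1 - (f x / r) ^ 2) by field_simp,
      sqrt_mul (sq_nonneg r), sqrt_sq hr.le]
  refine ((hasDerivAt_arcsin hmem.1.ne' hmem.2.ne).comp x (hf.div_const r)).congr_deriv ?_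
  rw [hsqrt, div_mul_div_comm, one_mul, mul_comm r]

variable {f' : ℝ → ℝ} {a b : ℝ}

theorem intervalIntegrable_deriv_div_sqrt_sq_sub_sq (hab : a ≤ b)
    (hcont : ContinuousOn f (Icc a b)) (hderiv : ∀ x ∈ Ioo a b, HasDerivAt f (f' x) x)
    (hnonneg : ∀ x ∈ Ioo a b, 0 ≤ f' x) (hf : MapsTo f (Ioo a b) (Ioo (-r) r)) :
    IntervalIntegrable (fun x => f' x / √(r ^ 2 - f x ^ 2)) MeasureTheory.volume a b := by
  apply intervalIntegral.intervalIntegrable_deriv_of_nonneg (g := fun x => arcsin (f x / r))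
  · rw [uIcc_of_le hab]
    exact continuous_arcsin.comp_continuousOn (hcont.div_const r)
  · rw [min_eq_left hab, max_eq_right hab]
    exact fun x hx => hasDerivAt_arcsin_div (hderiv x hx) (hf hx)
  · rw [min_eq_left hab, max_eq_right hab]
    exact fun x hx => div_nonneg (hnonneg x hx) (sqrt_nonneg _)

theorem integral_deriv_div_sqrt_sq_sub_sq (hab : a ≤ b)
    (hcont : ContinuousOn f (Icc a b)) (hderiv : ∀ x ∈ Ioo a b, HasDerivAt f (f' x) x)
    (hnonneg : ∀ x ∈ Ioo a b, 0 ≤ f' x) (hf : MapsTo f (Ioo a b) (Ioo (-r) r)) :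
    ∫ x in a..b, f' x / √(r ^ 2 - f x ^ 2) = arcsin (f b / r) - arcsin (f a / r) :=
  intervalIntegral.integral_eq_sub_of_hasDerivAt_of_le hab
    (continuous_arcsin.comp_continuousOn (hcont.div_const r))
    (fun x hx => hasDerivAt_arcsin_div (hderiv x hx) (hf hx))
    (intervalIntegrable_deriv_div_sqrt_sq_sub_sq hab hcont hderiv hnonneg hf)

end ArcsinPrimitive

/-- The integral `∫ dθ / √(sin² a - sin² θ)` over `[-a, a]`, which measures the period of a pendulum
of amplitude `2a`. For `0 < a < π / 2` it equals `2 K(sin a)`, where `K` is the complete elliptic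
integral of the first kind. The integrand takes the junk value `0` at `θ = ±a`. -/
noncomputable def pendulumIntegral (a : ℝ) : ℝ :=
  ∫ θ in (-a)..a, 1 / √(sin a ^ 2 - sin θ ^ 2)

theorem cos_two_mul_sub_cos_two_mul (x y : ℝ) :
    cos (2 * x) - cos (2 * y) = 2 * (sin y ^ 2 - sin x ^ 2) := by
  rw [cos_two_mul_eq_one_sub, cos_two_mul_eq_one_sub]
  ring

theorem Lp_eq_pendulumIntegral_div {ε : ℝ} (hε : 0 ≤ ε) (a : ℝ) :
    Lp ε a = pendulumIntegral a / (2 * √ε) := by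
  have hsqrt (θ : ℝ) : √(2 * ε * (cos (2 * θ) - cos (2 * a))) =
      2 * √ε * √(sin a ^ 2 - sin θ ^ 2) := by
    rw [cos_two_mul_sub_cos_two_mul, show 2 * ε * (2 * (sin a ^ 2 - sin θ ^ 2)) =
        2 ^ 2 * ε * (sin a ^ 2 - sin θ ^ 2) by ring, sqrt_mul (by positivity),
      sqrt_mul (by positivity), sqrt_sq zero_le_two]
  simp only [Lp, pendulumIntegral, hsqrt, ← intervalIntegral.integral_div]
  refine intervalIntegral.integral_congr fun θ _ => ?_
  rw [div_div, mul_comm]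

section Amplitude

variable {a θ : ℝ}

theorem mapsTo_sin_Ioo (ha : a ≤ π / 2) : MapsTo sin (Ioo (-a) a) (Ioo (-sin a) (sin a)) := by
  intro θ hθ
  rw [← sin_neg]
  exact ⟨sin_lt_sin_of_lt_of_le_pi_div_two (by linarith) (by linarith [hθ.2]) hθ.1,
    sin_lt_sin_of_lt_of_le_pi_div_two (by linarith [hθ.1]) ha hθ.2⟩

theorem cos_le_cos_of_mem_Icc_neg (ha : a ≤ π) (hθ : θ ∈ Icc (-a) a) : cos a ≤ cos θ := by
  rw [← cos_abs θ]
  exact cos_le_cos_of_nonneg_of_le_pi (abs_nonneg θ) ha (abs_le.2 hθ)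

theorem cos_nonneg_of_mem_Ioo_neg (ha : a ≤ π / 2) (hθ : θ ∈ Ioo (-a) a) : 0 ≤ cos θ :=
  cos_nonneg_of_mem_Icc ⟨by linarith [hθ.1], by linarith [hθ.2]⟩

theorem intervalIntegrable_cos_div_sqrt_sin_sq_sub (ha₀ : 0 ≤ a) (ha : a ≤ π / 2) :
    IntervalIntegrable (fun θ => cos θ / √(sin a ^ 2 - sin θ ^ 2))
      MeasureTheory.volume (-a) a :=
  intervalIntegrable_deriv_div_sqrt_sq_sub_sq (neg_le_self ha₀) continuous_sin.continuousOn
    (fun θ _ => hasDerivAt_sin θ) (fun _ => cos_nonneg_of_mem_Ioo_neg ha) (mapsTo_sin_Ioo ha)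

theorem integral_cos_div_sqrt_sin_sq_sub (ha₀ : 0 < a) (ha : a ≤ π / 2) :
    ∫ θ in (-a)..a, cos θ / √(sin a ^ 2 - sin θ ^ 2) = π := by
  have hsin : sin a ≠ 0 := (sin_pos_of_pos_of_lt_pi ha₀ (by linarith [pi_pos])).ne'
  rw [integral_deriv_div_sqrt_sq_sub_sq (neg_le_self ha₀.le) continuous_sin.continuousOn
    (fun θ _ => hasDerivAt_sin θ) (fun _ => cos_nonneg_of_mem_Ioo_neg ha) (mapsTo_sin_Ioo ha),
    sin_neg, neg_div, div_self hsin, arcsin_neg, arcsin_one]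
  ring

theorem one_div_sqrt_le_cos_div_sqrt_div_cos (ha : a < π / 2) (hθ : θ ∈ Icc (-a) a) :
    1 / √(sin a ^ 2 - sin θ ^ 2) ≤ cos θ / √(sin a ^ 2 - sin θ ^ 2) / cos a := by
  have hcos : 0 < cos a := cos_pos_of_mem_Ioo ⟨by linarith [hθ.1, hθ.2, pi_pos], ha⟩
  rw [div_right_comm]
  gcongr
  exact (one_le_div hcos).2 (cos_le_cos_of_mem_Icc_neg (by linarith [pi_pos]) hθ)

theorem intervalIntegrable_one_div_sqrt_sin_sq_sub (ha₀ : 0 ≤ a) (ha : a < π / 2) :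
    IntervalIntegrable (fun θ => 1 / √(sin a ^ 2 - sin θ ^ 2))
      MeasureTheory.volume (-a) a := by
  apply ((intervalIntegrable_cos_div_sqrt_sin_sq_sub ha₀ ha.le).div_const (cos a)).mono_fun'
  · exact Measurable.aestronglyMeasurable (by fun_prop)
  · rw [uIoc_of_le (neg_le_self ha₀)]
    filter_upwards [MeasureTheory.ae_restrict_mem measurableSet_Ioc] with θ hθ
    rw [norm_of_nonneg (by positivity)]
    exact one_div_sqrt_le_cos_div_sqrt_div_cos ha (Ioc_subset_Icc_self hθ)

theorem pi_le_pendulumIntegral (ha₀ : 0 < a) (ha : a < π / 2) : π ≤ pendulumIntegral a := by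
  rw [← integral_cos_div_sqrt_sin_sq_sub ha₀ ha.le]
  refine intervalIntegral.integral_mono_on (neg_le_self ha₀.le)
    (intervalIntegrable_cos_div_sqrt_sin_sq_sub ha₀.le ha.le)
    (intervalIntegrable_one_div_sqrt_sin_sq_sub ha₀.le ha) fun θ _ => ?_
  gcongr
  exact cos_le_one θ

theorem pendulumIntegral_le_pi_div_cos (ha₀ : 0 < a) (ha : a < π / 2) :
    pendulumIntegral a ≤ π / cos a := by
  rw [← integral_cos_div_sqrt_sin_sq_sub ha₀ ha.le, ← intervalIntegral.integral_div]
  exact intervalIntegral.integral_mono_on (neg_le_self ha₀.le)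
    (intervalIntegrable_one_div_sqrt_sin_sq_sub ha₀.le ha)
    ((intervalIntegrable_cos_div_sqrt_sin_sq_sub ha₀.le ha.le).div_const _)
    fun θ => one_div_sqrt_le_cos_div_sqrt_div_cos ha

end Amplitude

theorem tendsto_pendulumIntegral : Tendsto pendulumIntegral (𝓝[>] 0) (𝓝 π) := by
  have hupper : Tendsto (fun a => π / cos a) (𝓝[>] 0) (𝓝 π) := by
    have hcont : ContinuousAt (fun a => π / cos a) 0 :=
      continuousAt_const.div continuous_cos.continuousAt (by simp)
    simpa using hcont.tendsto.mono_left nhdsWithin_le_nhds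
  have hmem : Ioo 0 (π / 2) ∈ 𝓝[>] (0 : ℝ) := Ioo_mem_nhdsGT pi_div_two_pos
  refine tendsto_of_tendsto_of_tendsto_of_le_of_le' tendsto_const_nhds hupper ?_ ?_
  · filter_upwards [hmem] with a ha using pi_le_pendulumIntegral ha.1 ha.2
  · filter_upwards [hmem] with a ha using pendulumIntegral_le_pi_div_cos ha.1 ha.2

end

/-- `L_p(θ₀) → π/(2√ε)` as `θ₀ → 0⁺`. -/
theorem stmt_7 (ε : ℝ) (hε : 0 < ε) :
    Tendsto (fun θ₀ => Lp ε θ₀)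
      (nhdsWithin 0 (Set.Ioo 0 (Real.pi / 2)))
      (nhds (Real.pi / (2 * Real.sqrt ε))) := by
  simp only [Lp_eq_pendulumIntegral_div hε.le]
  exact (tendsto_pendulumIntegral.mono_left
    (nhdsWithin_mono 0 Set.Ioo_subset_Ioi_self)).div_const (2 * Real.sqrt ε)
end

section
/- Let ε > 0, ν > 0, L > 0, and let θ : [0,L] → ℝ be continuously differentiable with θ(L/2) = 0 and θ'(R) = 2·√(ε·(1+ν)) · √( 1 − sin²(θ(R))/(1+ν) ) for all R ∈ [0,L]. Then: (i) θ(L) > π/2 if and only if √ε·L·√(1+ν) > ∫_0^{π/2} (1 − sin²(t)/(1+ν))^{−1/2} dt, and (ii) θ(L) < π if and only if √ε·L·√(1+ν) < 2·∫_0^{π/2} (1 − sin²(t)/(1+ν))^{−1/2} dt. (Condition (i) is the stability condition |θ₀| > π/2 for the perversion and condition (ii) is the no-hard-contact condition |θ₀| < π; together they read √ε·L/2 < k(ν) < √ε·L with k(ν) = K(1/(1+ν))/√(1+ν).) -/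
/-!
Separating variables in `θ' = k √(1 - m sin² θ)` with `θ a = 0` shows that the incomplete elliptic
integral `F(θ b | m)` equals `k (b - a)`. For `m < 1` the function `F(· | m)` is strictly
increasing, with `F(π/2 | m) = K(m)` and, by the symmetry of `sin²` about `π/2`,
`F(π | m) = 2 K(m)`; comparing `θ b` with `π/2` and `π` is therefore comparing `k (b - a)` with
`K(m)` and `2 K(m)`. The perversion is the case `m = 1 / (1 + ν)`, `k = 2 √(ε (1 + ν))`,
`[a, b] = [L/2, L]`.
-/

open Set MeasureTheory intervalIntegral
open scoped Interval Real

theorem integral_inv_eq_integral_of_hasDerivWithinAt_mul_comp {a b : ℝ} {θ c v : ℝ → ℝ}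
    (hθ : ContinuousOn θ [[a, b]]) (hc : ContinuousOn c [[a, b]])
    (hv : ContinuousOn v (θ '' [[a, b]])) (hv₀ : ∀ u ∈ θ '' [[a, b]], v u ≠ 0)
    (hode : ∀ x ∈ Ioo (min a b) (max a b), HasDerivWithinAt θ (c x * v (θ x)) (Ioi x) x) :
    ∫ u in θ a..θ b, (v u)⁻¹ = ∫ x in a..b, c x := by
  have hvθ : ContinuousOn (fun x ↦ v (θ x)) [[a, b]] := hv.comp hθ (mapsTo_image θ _)
  calc ∫ u in θ a..θ b, (v u)⁻¹
      = ∫ x in a..b, (v (θ x))⁻¹ * (c x * v (θ x)) :=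
        (integral_comp_mul_deriv'' hθ hode (hc.mul hvθ) (hv.inv₀ hv₀)).symm
    _ = ∫ x in a..b, c x := integral_congr fun x hx ↦ by
        have hvx : v (θ x) ≠ 0 := hv₀ _ (mem_image_of_mem θ hx)
        field_simp

theorem strictMono_integral_of_pos {f : ℝ → ℝ}
    (hf : ∀ x y, IntervalIntegrable f volume x y) (hpos : ∀ x, 0 < f x) (a : ℝ) :
    StrictMono fun x ↦ ∫ t in a..x, f t := by
  intro x y hxy
  rw [← sub_pos, integral_interval_sub_left (hf a y) (hf a x)]
  exact intervalIntegral_pos_of_pos (hf x y) hpos hxy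

theorem integral_eq_two_smul_integral_half_of_comp_sub_left_eq {E : Type*}
    [NormedAddCommGroup E] [NormedSpace ℝ E] {f : ℝ → E} {a : ℝ}
    (hf : IntervalIntegrable f volume 0 a) (hsymm : ∀ x, f (a - x) = f x) :
    ∫ x in 0..a, f x = (2 : ℝ) • ∫ x in 0..a / 2, f x := by
  have half_mem : a / 2 ∈ [[0, a]] := by
    rcases le_total 0 a with h | h
    · exact mem_uIcc_of_le (by linarith) (by linarith)
    · exact mem_uIcc_of_ge (by linarith) (by linarith)
  have hfirst : IntervalIntegrable f volume 0 (a / 2) :=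
    hf.mono_set (uIcc_subset_uIcc left_mem_uIcc half_mem)
  have hsecond : IntervalIntegrable f volume (a / 2) a :=
    hf.mono_set (uIcc_subset_uIcc half_mem right_mem_uIcc)
  have hreflect : ∫ x in a / 2..a, f x = ∫ x in 0..a / 2, f x := by
    simpa only [hsymm, sub_half, sub_zero] using
      (integral_comp_sub_left (a := 0) (b := a / 2) f a).symm
  rw [← integral_add_adjacent_intervals hfirst hsecond, hreflect, two_smul]

/-- Legendre's incomplete elliptic integral of the first kind `F(φ | m)`, as a function of the
parameter `m` (the square of the modulus) and the amplitude `φ`. For `m ≥ 1` the integrand can be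
singular or the radicand negative, and the value is then a junk value of `√`, `⁻¹` or `∫`. -/
noncomputable def ellipticF (m φ : ℝ) : ℝ :=
  ∫ t in 0..φ, (√(1 - m * Real.sin t ^ 2))⁻¹

/-- The complete elliptic integral of the first kind `K(m)`, as a function of the parameter `m`
(the square of the modulus). -/
noncomputable def ellipticK (m : ℝ) : ℝ :=
  ellipticF m (π / 2)

section Elliptic

variable {m : ℝ}

theorem one_sub_mul_sin_sq_pos (hm : m < 1) (t : ℝ) : 0 < 1 - m * Real.sin t ^ 2 := by
  refine sub_pos.2 ?_
  calc m * Real.sin t ^ 2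
      ≤ max m 0 * 1 :=
        mul_le_mul (le_max_left m 0) (Real.sin_sq_le_one t) (sq_nonneg _) (le_max_right m 0)
    _ = max m 0 := mul_one _
    _ < 1 := max_lt hm one_pos

theorem sqrt_one_sub_mul_sin_sq_pos (hm : m < 1) (t : ℝ) : 0 < √(1 - m * Real.sin t ^ 2) :=
  Real.sqrt_pos.2 (one_sub_mul_sin_sq_pos hm t)

theorem intervalIntegrable_ellipticF (hm : m < 1) (x y : ℝ) :
    IntervalIntegrable (fun t ↦ (√(1 - m * Real.sin t ^ 2))⁻¹) volume x y :=
  Continuous.intervalIntegrable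
    (by fun_prop (disch := exact fun t ↦ (sqrt_one_sub_mul_sin_sq_pos hm t).ne')) x y

theorem ellipticF_strictMono (hm : m < 1) : StrictMono (ellipticF m) :=
  strictMono_integral_of_pos (intervalIntegrable_ellipticF hm)
    (fun t ↦ inv_pos.2 (sqrt_one_sub_mul_sin_sq_pos hm t)) 0

theorem ellipticF_pi (hm : m < 1) : ellipticF m π = 2 * ellipticK m :=
  integral_eq_two_smul_integral_half_of_comp_sub_left_eq (intervalIntegrable_ellipticF hm 0 π)
    fun t ↦ by rw [Real.sin_pi_sub]

theorem ellipticF_eq_mul_sub_of_hasDerivWithinAt (hm : m < 1) {k a b : ℝ} {θ : ℝ → ℝ}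
    (hθ : ContinuousOn θ [[a, b]]) (ha : θ a = 0)
    (hode : ∀ x ∈ Ioo (min a b) (max a b),
      HasDerivWithinAt θ (k * √(1 - m * Real.sin (θ x) ^ 2)) (Ioi x) x) :
    ellipticF m (θ b) = k * (b - a) := by
  have hsep := integral_inv_eq_integral_of_hasDerivWithinAt_mul_comp
    (c := fun _ ↦ k) (v := fun u ↦ √(1 - m * Real.sin u ^ 2)) hθ continuousOn_const (by fun_prop)
    (fun u _ ↦ (sqrt_one_sub_mul_sin_sq_pos hm u).ne') hode
  rw [ha, intervalIntegral.integral_const, smul_eq_mul, mul_comm] at hsep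
  exact hsep

end Elliptic

theorem stmt_18_general {m k a b : ℝ} (hm : m < 1) {θ : ℝ → ℝ}
    (hθ : ContinuousOn θ [[a, b]]) (ha : θ a = 0)
    (hode : ∀ x ∈ Ioo (min a b) (max a b),
      HasDerivWithinAt θ (k * √(1 - m * Real.sin (θ x) ^ 2)) (Ioi x) x) :
    (π / 2 < θ b ↔ ellipticK m < k * (b - a)) ∧
      (θ b < π ↔ k * (b - a) < 2 * ellipticK m) := by
  rw [← ellipticF_eq_mul_sub_of_hasDerivWithinAt hm hθ ha hode, ← ellipticF_pi hm]
  exact ⟨(ellipticF_strictMono hm).lt_iff_lt.symm, (ellipticF_strictMono hm).lt_iff_lt.symm⟩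

/-- Stability (`|θ₀| > π/2`) and no-hard-contact (`|θ₀| < π`) conditions for a
perversion with pseudo-energy parameter `ν`, in terms of the complete elliptic
integral `K(1/(1+ν)) = ∫_0^{π/2} (1 - sin²t/(1+ν))^{-1/2} dt`. -/
theorem stmt_18 (ε ν L : ℝ) (hε : 0 < ε) (hν : 0 < ν) (hL : 0 < L)
    (θ : ℝ → ℝ) (hθ : ContDiff ℝ 1 θ) (hmid : θ (L / 2) = 0)
    (hode : ∀ R ∈ Set.Icc 0 L,
      deriv θ R = 2 * Real.sqrt (ε * (1 + ν)) *
        Real.sqrt (1 - Real.sin (θ R) ^ 2 / (1 + ν))) :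
    (Real.pi / 2 < θ L ↔
      (∫ t in (0 : ℝ)..(Real.pi / 2), 1 / Real.sqrt (1 - Real.sin t ^ 2 / (1 + ν)))
        < Real.sqrt ε * L * Real.sqrt (1 + ν)) ∧
    (θ L < Real.pi ↔
      Real.sqrt ε * L * Real.sqrt (1 + ν) <
        2 * ∫ t in (0 : ℝ)..(Real.pi / 2),
          1 / Real.sqrt (1 - Real.sin t ^ 2 / (1 + ν))) := by
  have hm : (1 + ν)⁻¹ < 1 := inv_lt_one_of_one_lt₀ (by linarith)
  have hderiv : ∀ R ∈ Ioo (min (L / 2) L) (max (L / 2) L), HasDerivWithinAt θ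
      (2 * √(ε * (1 + ν)) * √(1 - (1 + ν)⁻¹ * Real.sin (θ R) ^ 2)) (Ioi R) R := by
    intro R hR
    rw [min_eq_left (by linarith), max_eq_right (by linarith)] at hR
    rw [← div_eq_inv_mul, ← hode R ⟨by linarith [hR.1], hR.2.le⟩]
    exact (hθ.differentiable one_ne_zero R).hasDerivAt.hasDerivWithinAt
  have htime : 2 * √(ε * (1 + ν)) * (L - L / 2) = √ε * L * √(1 + ν) := by
    rw [Real.sqrt_mul hε.le]; ring
  simpa only [htime, ellipticK, ellipticF, div_eq_inv_mul _ (1 + ν), one_div] using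
    stmt_18_general hm hθ.continuous.continuousOn hmid hderiv
end
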